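/- Let ν be a probability measure on [0,∞) with cumulative distribution function F such that F̄ = 1 − F is everywhere positive and regularly varying at infinity with index θ − α for some 0 < θ < α, and let (a_n) be a sequence with a_n → ∞ and lim_{n→∞} n a_n^{−α} H(a_n) = 1. Then for all real 0 ≤ s ≤ t, every z > 0 and every ε ∈ {0,1}: (a) lim_{n→∞} ( ⌊nt⌋ − ⌊ns⌋ ) · (a_n z)^{−α} H( a_n z ) = (t − s) z^{θ−α}, and (b) lim_{n→∞} G( a_n z )^{⌊nt⌋ − ⌊ns⌋ − ε} = exp( −(α/(α−θ)) (t − s) z^{θ−α} ). -/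

import Mathlib

open MeasureTheory Filter Real Topology

/-!
Write `T` for the tail of `ν`. By layer cake, `1 - G t = ∫ u in (0, 1), T (t u ^ (1/α))`, and
Potter's bound lets dominated convergence pass to the limit after division by `T t`: this is
Karamata's theorem, `(1 - G) / T → α / θ`. Since `G t = F t - t ^ (-α) H t`, the function
`t ^ (-α) H t` is asymptotic to `(α - θ) / θ * T t`, so it is regularly varying of index `θ - α`,
and `1 - G t ~ α / (α - θ) * t ^ (-α) H t`. The first limit is then regular variation along `a n`,
and the second is `G ^ k = exp (k log G)` with `log G ~ -(1 - G)`.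
-/

section Limits

variable {ι : Type*} {l : Filter ι}

theorem tendsto_mul_of_tendsto_div {k f g : ι → ℝ} {c r : ℝ} (hr : r ≠ 0)
    (hkf : Tendsto (fun i => k i * f i) l (𝓝 c)) (hgf : Tendsto (fun i => g i / f i) l (𝓝 r)) :
    Tendsto (fun i => k i * g i) l (𝓝 (c * r)) := by
  refine (hkf.mul hgf).congr' ?_
  filter_upwards [hgf.eventually_ne hr] with i hi
  have hf : f i ≠ 0 := (div_ne_zero_iff.1 hi).2
  field_simp

theorem tendsto_zpow_exp_neg {x : ι → ℝ} {k : ι → ℤ} {c : ℝ} (hx : Tendsto x l (𝓝 1))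
    (hk : Tendsto (fun i => k i * (1 - x i)) l (𝓝 c)) :
    Tendsto (fun i => x i ^ k i) l (𝓝 (exp (-c))) := by
  have hslope : Tendsto (fun i => dslope log 1 (x i)) l (𝓝 1) := by
    have hcont : ContinuousAt (dslope log 1) 1 :=
      continuousAt_dslope_same.2 (differentiableAt_log one_ne_zero)
    simpa [Function.comp_def] using hcont.tendsto.comp hx
  have hlog : Tendsto (fun i => k i * log (x i)) l (𝓝 (-c)) := by
    have hlim := (hk.mul hslope).neg
    rw [mul_one] at hlim
    refine hlim.congr fun i => ?_
    have : (x i - 1) * dslope log 1 (x i) = log (x i) := by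
      simpa using sub_smul_dslope log 1 (x i)
    rw [← this]
    ring
  refine hlog.rexp.congr' ?_
  filter_upwards [hx.eventually_const_lt zero_lt_one] with i hi
  rw [← log_zpow, exp_log (zpow_pos hi _)]

theorem tendsto_floor_natCast_mul_div (r : ℝ) :
    Tendsto (fun n : ℕ => (⌊n * r⌋ : ℝ) / n) atTop (𝓝 r) := by
  have hfract : Tendsto (fun n : ℕ => Int.fract (n * r) / n) atTop (𝓝 0) :=
    tendsto_bdd_div_atTop_nhds_zero (.of_forall fun _ => Int.fract_nonneg _)
      (.of_forall fun _ => (Int.fract_lt_one _).le) tendsto_natCast_atTop_atTop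
  refine (sub_zero r ▸ hfract.const_sub r).congr' ?_
  filter_upwards [eventually_ne_atTop 0] with n hn
  have hn' : (n : ℝ) ≠ 0 := Nat.cast_ne_zero.2 hn
  rw [Int.fract]
  field_simp
  ring

theorem tendsto_floor_sub_floor_sub_mul {b : ℕ → ℝ} {c : ℝ}
    (hb : Tendsto (fun n : ℕ => n * b n) atTop (𝓝 c)) (s t : ℝ) (m : ℤ) :
    Tendsto (fun n : ℕ => ((⌊n * t⌋ - ⌊n * s⌋ - m : ℤ) : ℝ) * b n) atTop (𝓝 ((t - s) * c)) := by
  have hm : Tendsto (fun n : ℕ => (m : ℝ) / n) atTop (𝓝 0) :=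
    tendsto_const_div_atTop_nhds_zero_nat _
  have hfloor := ((tendsto_floor_natCast_mul_div t).sub (tendsto_floor_natCast_mul_div s)).sub hm
  rw [sub_zero] at hfloor
  refine (hfloor.mul hb).congr' ?_
  filter_upwards [eventually_ne_atTop 0] with n hn
  have hn' : (n : ℝ) ≠ 0 := Nat.cast_ne_zero.2 hn
  push_cast
  field_simp

end Limits

/-- Regular variation at infinity of index `ρ`. Where `f` vanishes the quotient is the junk value
`0`, so the condition forces `f x ≠ 0` for all large `x`. -/
def IsRegularlyVarying (f : ℝ → ℝ) (ρ : ℝ) : Prop :=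
  ∀ c, 0 < c → Tendsto (fun x => f (c * x) / f x) atTop (𝓝 (c ^ ρ))

namespace IsRegularlyVarying

theorem of_tendsto_div {f g : ℝ → ℝ} {ρ r : ℝ} (hf : IsRegularlyVarying f ρ)
    (hr : r ≠ 0) (hgf : Tendsto (fun x => g x / f x) atTop (𝓝 r)) : IsRegularlyVarying g ρ := by
  intro c hc
  have hgf_scaled := hgf.comp (tendsto_id.const_mul_atTop hc)
  have hlim := ((hf c hc).mul hgf_scaled).div hgf hr
  rw [mul_div_cancel_right₀ _ hr] at hlim
  refine hlim.congr' ?_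
  filter_upwards [hgf.eventually_ne hr, hgf_scaled.eventually_ne hr] with x hx hcx
  obtain ⟨hgx, hfx⟩ := div_ne_zero_iff.1 hx
  obtain ⟨-, hfcx⟩ := div_ne_zero_iff.1 hcx
  simp only [Pi.div_apply, Function.comp_apply, id_eq] at hfcx ⊢
  field_simp

theorem tendsto_mul_comp_mul {f : ℝ → ℝ} {ρ : ℝ} (hf : IsRegularlyVarying f ρ) {ι : Type*}
    {l : Filter ι} {a k : ι → ℝ} {κ z : ℝ} (ha : Tendsto a l atTop)
    (hk : Tendsto (fun i => k i * f (a i)) l (𝓝 κ)) (hz : 0 < z) :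
    Tendsto (fun i => k i * f (a i * z)) l (𝓝 (κ * z ^ ρ)) := by
  refine tendsto_mul_of_tendsto_div (rpow_pos_of_pos hz ρ).ne' hk ?_
  simpa only [Function.comp_def, mul_comm z] using (hf z hz).comp ha

end IsRegularlyVarying

section Antitone

variable {T : ℝ → ℝ}

theorem le_geometric_of_antitone_of_mul_le (hT : Antitone T) (hpos : ∀ x, 0 < T x) {q c x₀ : ℝ}
    (hx₀ : 0 < x₀) (hq₀ : 0 < q) (hq₁ : q < 1) (hstep : ∀ t, x₀ ≤ t → T (t * q) ≤ c * T t) (k : ℕ) :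
    ∀ t, x₀ ≤ t → T (t * q ^ k) ≤ T 0 / T x₀ * c ^ k * T t := by
  have hB : 1 ≤ T 0 / T x₀ := (one_le_div (hpos x₀)).2 (hT hx₀.le)
  have hc : 1 ≤ c := by
    have hle : T x₀ ≤ c * T x₀ := (hT (by nlinarith)).trans (hstep x₀ le_rfl)
    exact (le_mul_iff_one_le_left (hpos x₀)).1 hle
  induction k with
  | zero =>
    intro t _
    simpa using le_mul_of_one_le_left (hpos t).le hB
  | succ k ih =>
    intro t ht
    have hshift : T 0 / T x₀ * c ^ k * T (t * q) ≤ T 0 / T x₀ * c ^ (k + 1) * T t :=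
      calc T 0 / T x₀ * c ^ k * T (t * q) ≤ T 0 / T x₀ * c ^ k * (c * T t) := by
            gcongr
            exact hstep t ht
        _ = T 0 / T x₀ * c ^ (k + 1) * T t := by ring
    refine le_trans ?_ hshift
    rcases le_total x₀ (t * q) with hlarge | hsmall
    · simpa only [pow_succ', mul_assoc] using ih (t * q) hlarge
    · have htq : 0 ≤ t * q ^ (k + 1) := by have := hx₀.trans_le ht; positivity
      calc T (t * q ^ (k + 1)) ≤ T 0 := hT htq
        _ = T 0 / T x₀ * 1 * T x₀ := by field_simp [(hpos x₀).ne']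
        _ ≤ T 0 / T x₀ * c ^ k * T (t * q) := by
            gcongr
            · exact (hpos _).le
            · exact one_le_pow₀ hc
            · exact hT hsmall

theorem IsRegularlyVarying.potter_bound {ρ β : ℝ} (hRV : IsRegularlyVarying T ρ)
    (hT : Antitone T) (hpos : ∀ x, 0 < T x) (hβ : 0 ≤ β) (hρβ : -ρ < β) :
    ∃ C x₀, ∀ t v, x₀ ≤ t → 0 < v → v ≤ 1 → T (t * v) ≤ C * v ^ (-β) * T t := by
  have hlt : (2⁻¹ : ℝ) ^ ρ < 2⁻¹ ^ (-β) :=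
    rpow_lt_rpow_of_exponent_gt (by norm_num) (by norm_num) (by linarith)
  obtain ⟨x₀, hx₀, hstep⟩ : ∃ x₀ > 0, ∀ t, x₀ ≤ t → T (t * 2⁻¹) ≤ 2⁻¹ ^ (-β) * T t := by
    obtain ⟨x₁, hx₁⟩ := eventually_atTop.1 ((hRV 2⁻¹ (by norm_num)).eventually_lt_const hlt)
    refine ⟨max x₁ 1, by positivity, fun t ht => ?_⟩
    rw [mul_comm t]
    exact ((div_lt_iff₀ (hpos t)).1 (hx₁ t ((le_max_left _ _).trans ht))).le
  refine ⟨T 0 / T x₀ * 2⁻¹ ^ (-β), x₀, fun t v ht hv hv1 => ?_⟩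
  obtain ⟨k, hkv, hvk⟩ :=
    exists_nat_pow_near_of_lt_one hv hv1 (by norm_num : (0 : ℝ) < 2⁻¹) (by norm_num)
  have hpow : ((2⁻¹ : ℝ) ^ (-β)) ^ k ≤ v ^ (-β) := by
    rw [rpow_pow_comm (by norm_num)]
    exact rpow_le_rpow_of_nonpos hv hvk (neg_nonpos.2 hβ)
  have ht₀ : 0 < t := hx₀.trans_le ht
  have hT₀ := hpos 0
  have hTx₀ := hpos x₀
  have hTt := hpos t
  calc T (t * v) ≤ T (t * 2⁻¹ ^ (k + 1)) := hT (by gcongr)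
    _ ≤ T 0 / T x₀ * (2⁻¹ ^ (-β)) ^ (k + 1) * T t :=
        le_geometric_of_antitone_of_mul_le hT hpos hx₀ (by norm_num) (by norm_num) hstep _ t ht
    _ = T 0 / T x₀ * 2⁻¹ ^ (-β) * (2⁻¹ ^ (-β)) ^ k * T t := by ring
    _ ≤ T 0 / T x₀ * 2⁻¹ ^ (-β) * v ^ (-β) * T t := by gcongr

theorem integral_Ioo_zero_one_rpow {r : ℝ} (hr : -1 < r) :
    ∫ u in Set.Ioo (0 : ℝ) 1, u ^ r = 1 / (r + 1) := by
  rw [← integral_Ioc_eq_integral_Ioo, ← intervalIntegral.integral_of_le zero_le_one,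
    integral_rpow (.inl hr), one_rpow, zero_rpow (by linarith), sub_zero]

theorem IsRegularlyVarying.tendsto_integral_comp_mul_rpow_div {ρ p : ℝ}
    (hRV : IsRegularlyVarying T ρ) (hT : Antitone T) (hpos : ∀ x, 0 < T x) (hp : 0 < p)
    (hρp : -1 < ρ * p) :
    Tendsto (fun t => (∫ u in Set.Ioo (0 : ℝ) 1, T (t * u ^ p)) / T t) atTop
      (𝓝 (1 / (ρ * p + 1))) := by
  have hρ : -ρ < p⁻¹ := by rw [← one_div, lt_div_iff₀ hp]; linarith
  obtain ⟨β, hβ, hβp⟩ := exists_between (max_lt hρ (inv_pos.2 hp))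
  obtain ⟨hρβ, hβ₀⟩ := max_lt_iff.1 hβ
  obtain ⟨C, x₀, hC⟩ := hRV.potter_bound hT hpos hβ₀.le hρβ
  rw [← integral_Ioo_zero_one_rpow hρp]
  simp_rw [← integral_div]
  have hmeas : Measurable T := hT.measurable
  refine tendsto_integral_filter_of_dominated_convergence (fun u => C * u ^ (p * -β))
    (.of_forall fun t => Measurable.aestronglyMeasurable (by fun_prop)) ?_ ?_ ?_
  · filter_upwards [eventually_ge_atTop x₀] with t ht
    filter_upwards [ae_restrict_mem measurableSet_Ioo] with u hu
    rw [norm_of_nonneg (div_pos (hpos _) (hpos t)).le, div_le_iff₀ (hpos t), rpow_mul hu.1.le]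
    exact hC t _ ht (rpow_pos_of_pos hu.1 p) (rpow_le_one hu.1.le hu.2.le hp.le)
  · refine Integrable.const_mul ?_ C
    rw [← IntegrableOn, intervalIntegral.integrableOn_Ioo_rpow_iff zero_lt_one, mul_neg,
      neg_lt_neg_iff]
    exact (lt_inv_mul_iff₀ hp).1 (by simpa using hβp)
  · filter_upwards [ae_restrict_mem measurableSet_Ioo] with u hu
    have hlim := hRV (u ^ p) (rpow_pos_of_pos hu.1 p)
    rw [← rpow_mul hu.1.le, mul_comm p] at hlim
    simpa only [mul_comm (u ^ p)] using hlim

end Antitone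

section Transforms

/-- The Williamson transform `G` of `ν`, with parameter `α`. -/
noncomputable def williamsonTransform (ν : Measure ℝ) (α t : ℝ) : ℝ :=
  ∫ x, max (1 - (x / t) ^ α) 0 ∂ν

/-- The truncated `α`-moment `H` of `ν`, scaled to `t ^ (-α) * H t`: the form in which it is
compared with the tail and with `1 - G`. -/
noncomputable def scaledTruncatedMoment (ν : Measure ℝ) (α t : ℝ) : ℝ :=
  t ^ (-α) * ∫ x in Set.Icc 0 t, x ^ α ∂ν

theorem antitone_measureReal_Ioi (μ : Measure ℝ) [IsFiniteMeasure μ] :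
    Antitone fun x => μ.real (Set.Ioi x) :=
  fun _ _ hxy => measureReal_mono (Set.Ioi_subset_Ioi hxy)

variable (ν : Measure ℝ) [IsProbabilityMeasure ν]

theorem one_sub_measureReal_Iic (x : ℝ) : 1 - ν.real (Set.Iic x) = ν.real (Set.Ioi x) := by
  rw [← probReal_compl_eq_one_sub measurableSet_Iic, Set.compl_Iic]

variable {ν} {α t : ℝ}

theorem tendsto_williamsonTransform_atTop (hν : ∀ᵐ x ∂ν, 0 ≤ x) (hα : 0 < α) :
    Tendsto (williamsonTransform ν α) atTop (𝓝 1) := by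
  have hmean : ∫ _, (1 : ℝ) ∂ν = 1 := by simp
  rw [← hmean]
  refine tendsto_integral_filter_of_dominated_convergence (fun _ => 1)
    (.of_forall fun t => Measurable.aestronglyMeasurable (by fun_prop)) ?_ (integrable_const 1) ?_
  · filter_upwards [eventually_gt_atTop 0] with t ht
    filter_upwards [hν] with x hx
    rw [norm_of_nonneg (le_max_right _ _)]
    exact max_le (sub_le_self _ (rpow_nonneg (div_nonneg hx ht.le) α)) zero_le_one
  · refine .of_forall fun x => ?_
    have hpow : Tendsto (fun t => (x / t) ^ α) atTop (𝓝 0) := by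
      simpa only [zero_rpow hα.ne', id_eq] using
        (tendsto_const_nhds.div_atTop tendsto_id).rpow_const (.inr hα.le)
    simpa using (hpow.const_sub 1).max (tendsto_const_nhds (x := (0 : ℝ)))

theorem one_sub_williamsonTransform_eq_add (hν : ∀ᵐ x ∂ν, 0 ≤ x) (hα : 0 < α) (ht : 0 < t) :
    1 - williamsonTransform ν α t = scaledTruncatedMoment ν α t + ν.real (Set.Ioi t) := by
  have hpow : IntegrableOn (fun x => t ^ (-α) * x ^ α) (Set.Icc 0 t) ν :=
    (continuous_const.mul (continuous_rpow_const hα.le)).continuousOn.integrableOn_Icc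
  have hpos_part : williamsonTransform ν α t = ∫ x in Set.Icc 0 t, (1 - t ^ (-α) * x ^ α) ∂ν := by
    rw [williamsonTransform, ← integral_indicator measurableSet_Icc]
    refine integral_congr_ae ?_
    filter_upwards [hν] with x hx
    have hxt : (x / t) ^ α = t ^ (-α) * x ^ α := by
      rw [div_rpow hx ht.le, rpow_neg ht.le, inv_mul_eq_div]
    rcases le_or_gt x t with hle | hlt
    · rw [Set.indicator_of_mem (Set.mem_Icc.2 ⟨hx, hle⟩), ← hxt, max_eq_left]
      exact sub_nonneg.2 (rpow_le_one (div_nonneg hx ht.le) ((div_le_one ht).2 hle) hα.le)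
    · rw [Set.indicator_of_notMem fun h => hlt.not_ge h.2, max_eq_right]
      exact sub_nonpos.2 (one_le_rpow ((one_le_div ht).2 hlt.le) hα.le)
  have hIcc : ν.real (Set.Icc 0 t) = ν.real (Set.Iic t) := by
    refine measureReal_congr ?_
    filter_upwards [hν] with x hx using propext (and_iff_right hx)
  rw [hpos_part, integral_sub (integrable_const _) hpow, integral_const_mul, setIntegral_const,
    smul_eq_mul, mul_one, hIcc, ← scaledTruncatedMoment, ← one_sub_measureReal_Iic]
  ring

theorem one_sub_williamsonTransform_eq_integral (hν : ∀ᵐ x ∂ν, 0 ≤ x) (hα : 0 < α) (ht : 0 < t) :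
    1 - williamsonTransform ν α t
      = ∫ u in Set.Ioo (0 : ℝ) 1, ν.real (Set.Ioi (t * u ^ α⁻¹)) := by
  set f : ℝ → ℝ := fun x => 1 - max (1 - (x / t) ^ α) 0
  have hf_le (x) : f x ≤ 1 := sub_le_self _ (le_max_right _ _)
  have hf_nonneg : 0 ≤ᵐ[ν] f := by
    filter_upwards [hν] with x hx
    have : 0 ≤ (x / t) ^ α := rpow_nonneg (div_nonneg hx ht.le) α
    exact sub_nonneg.2 (max_le (by linarith) zero_le_one)
  have hf_int : Integrable f ν := by
    refine .of_bound (Measurable.aestronglyMeasurable (by fun_prop)) 1 ?_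
    filter_upwards [hf_nonneg] with x hx
    rw [norm_of_nonneg hx]
    exact hf_le x
  have hlhs : 1 - williamsonTransform ν α t = ∫ x, f x ∂ν := by
    have hmax : Integrable (fun x => max (1 - (x / t) ^ α) 0) ν :=
      ((integrable_const 1).sub hf_int).congr (.of_forall fun x => sub_sub_cancel _ _)
    rw [integral_sub (integrable_const _) hmax, williamsonTransform]
    simp
  have hlevel {u : ℝ} (hu : u ∈ Set.Ioo 0 1) :
      ν.real {x | u < f x} = ν.real (Set.Ioi (t * u ^ α⁻¹)) := by
    refine measureReal_congr ?_
    filter_upwards [hν] with x hx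
    refine propext ?_
    change u < 1 - max (1 - (x / t) ^ α) 0 ↔ t * u ^ α⁻¹ < x
    rw [lt_sub_comm, max_lt_iff, sub_lt_sub_iff_left, and_iff_left (sub_pos.2 hu.2),
      ← rpow_inv_lt_iff_of_pos hu.1.le (div_nonneg hx ht.le) hα, lt_div_iff₀' ht]
  rw [hlhs, hf_int.integral_eq_integral_meas_lt hf_nonneg,
    setIntegral_eq_of_subset_of_forall_sdiff_eq_zero measurableSet_Ioi Set.Ioo_subset_Ioi_self]
  · exact setIntegral_congr_fun measurableSet_Ioo fun u hu => hlevel hu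
  · intro u hu
    have hu1 : 1 ≤ u := not_lt.1 fun h => hu.2 ⟨hu.1, h⟩
    have hempty : {x | u < f x} = ∅ :=
      Set.eq_empty_of_forall_notMem fun x hx => (hu1.trans_lt hx).not_ge (hf_le x)
    rw [hempty, measureReal_empty]

end Transforms

section RegularlyVaryingTail

variable {ν : Measure ℝ} [IsProbabilityMeasure ν] {α θ : ℝ}

theorem tendsto_one_sub_williamsonTransform_div_tail (hν : ∀ᵐ x ∂ν, 0 ≤ x) (hθ : 0 < θ)
    (hpos : ∀ x, 0 < ν.real (Set.Ioi x))
    (hRV : IsRegularlyVarying (fun x => ν.real (Set.Ioi x)) (θ - α)) (hα : 0 < α) :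
    Tendsto (fun t => (1 - williamsonTransform ν α t) / ν.real (Set.Ioi t)) atTop
      (𝓝 (α / θ)) := by
  have hindex : (θ - α) * α⁻¹ + 1 = θ / α := by field_simp; ring
  have hkaramata := hRV.tendsto_integral_comp_mul_rpow_div (antitone_measureReal_Ioi ν) hpos
    (inv_pos.2 hα) (by have := div_pos hθ hα; linarith)
  rw [hindex, one_div_div] at hkaramata
  refine hkaramata.congr' ?_
  filter_upwards [eventually_gt_atTop 0] with t ht
  rw [one_sub_williamsonTransform_eq_integral hν hα ht]

theorem tendsto_scaledTruncatedMoment_div_tail (hν : ∀ᵐ x ∂ν, 0 ≤ x) (hθ : 0 < θ)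
    (hpos : ∀ x, 0 < ν.real (Set.Ioi x))
    (hRV : IsRegularlyVarying (fun x => ν.real (Set.Ioi x)) (θ - α)) (hα : 0 < α) :
    Tendsto (fun t => scaledTruncatedMoment ν α t / ν.real (Set.Ioi t)) atTop
      (𝓝 ((α - θ) / θ)) := by
  have hlim := (tendsto_one_sub_williamsonTransform_div_tail hν hθ hpos hRV hα).sub_const 1
  rw [div_sub_one hθ.ne'] at hlim
  refine hlim.congr' ?_
  filter_upwards [eventually_gt_atTop 0] with t ht
  rw [one_sub_williamsonTransform_eq_add hν hα ht, add_div, div_self (hpos t).ne',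
    add_sub_cancel_right]

theorem tendsto_one_sub_williamsonTransform_div_scaledTruncatedMoment
    (hν : ∀ᵐ x ∂ν, 0 ≤ x) (hθ : 0 < θ) (hpos : ∀ x, 0 < ν.real (Set.Ioi x))
    (hRV : IsRegularlyVarying (fun x => ν.real (Set.Ioi x)) (θ - α)) (hθα : θ < α) :
    Tendsto (fun t => (1 - williamsonTransform ν α t) / scaledTruncatedMoment ν α t) atTop
      (𝓝 (α / (α - θ))) := by
  have hα : 0 < α := hθ.trans hθα
  have hlim := (tendsto_one_sub_williamsonTransform_div_tail hν hθ hpos hRV hα).div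
    (tendsto_scaledTruncatedMoment_div_tail hν hθ hpos hRV hα) (div_pos (sub_pos.2 hθα) hθ).ne'
  rw [div_div_div_cancel_right₀ hθ.ne'] at hlim
  exact hlim.congr fun t => div_div_div_cancel_right₀ (hpos t).ne' _ _

theorem isRegularlyVarying_scaledTruncatedMoment (hν : ∀ᵐ x ∂ν, 0 ≤ x) (hθ : 0 < θ)
    (hpos : ∀ x, 0 < ν.real (Set.Ioi x))
    (hRV : IsRegularlyVarying (fun x => ν.real (Set.Ioi x)) (θ - α)) (hθα : θ < α) :
    IsRegularlyVarying (scaledTruncatedMoment ν α) (θ - α) :=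
  hRV.of_tendsto_div (div_pos (sub_pos.2 hθα) hθ).ne'
    (tendsto_scaledTruncatedMoment_div_tail hν hθ hpos hRV (hθ.trans hθα))

theorem tendsto_williamsonTransform_zpow (hν : ∀ᵐ x ∂ν, 0 ≤ x) (hθ : 0 < θ)
    (hpos : ∀ x, 0 < ν.real (Set.Ioi x))
    (hRV : IsRegularlyVarying (fun x => ν.real (Set.Ioi x)) (θ - α)) (hθα : θ < α)
    {ι : Type*} {l : Filter ι} {a : ι → ℝ} (ha : Tendsto a l atTop) {k : ι → ℤ} {κ : ℝ}
    (hk : Tendsto (fun i => k i * scaledTruncatedMoment ν α (a i)) l (𝓝 κ)) :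
    Tendsto (fun i => williamsonTransform ν α (a i) ^ k i) l (𝓝 (exp (-(κ * (α / (α - θ)))))) := by
  have hα : 0 < α := hθ.trans hθα
  refine tendsto_zpow_exp_neg ((tendsto_williamsonTransform_atTop hν hα).comp ha) ?_
  exact tendsto_mul_of_tendsto_div (div_pos hα (sub_pos.2 hθα)).ne' hk
    ((tendsto_one_sub_williamsonTransform_div_scaledTruncatedMoment hν hθ hpos hRV hθα).comp ha)

end RegularlyVaryingTail

theorem kendall_fdd_limits_regvar_general
    (α θ : ℝ) (hθ : 0 < θ) (hθα : θ < α)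
    (ν : Measure ℝ) [IsProbabilityMeasure ν] (hν : ν (Set.Iio 0) = 0)
    (F G H : ℝ → ℝ)
    (hF : ∀ t, F t = (ν (Set.Iic t)).toReal)
    (hG : ∀ t, 0 < t → G t = ∫ x, max (1 - (x / t) ^ α) 0 ∂ν)
    (hH : ∀ t, 0 < t → H t = ∫ x in Set.Icc 0 t, x ^ α ∂ν)
    (htail : ∀ x, F x < 1)
    (hRV : IsRegularlyVarying (fun x => 1 - F x) (θ - α))
    {ι : Type*} {l : Filter ι} {a : ι → ℝ} (ha : Tendsto a l atTop)
    {k : ι → ℤ} {κ : ℝ} (hk : Tendsto (fun i => k i * (a i ^ (-α) * H (a i))) l (𝓝 κ))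
    {z : ℝ} (hz : 0 < z) :
    Tendsto (fun i => k i * (a i * z) ^ (-α) * H (a i * z)) l (𝓝 (κ * z ^ (θ - α))) ∧
    Tendsto (fun i => G (a i * z) ^ k i) l (𝓝 (exp (-(α / (α - θ)) * κ * z ^ (θ - α)))) := by
  have hν' : ∀ᵐ x ∂ν, 0 ≤ x := by simpa [ae_iff, Set.Iio] using hν
  have hF_tail (x) : 1 - F x = ν.real (Set.Ioi x) := by
    rw [hF, ← one_sub_measureReal_Iic, measureReal_def]
  have hpos (x) : 0 < ν.real (Set.Ioi x) := hF_tail x ▸ sub_pos.2 (htail x)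
  simp only [hF_tail] at hRV
  have haz : Tendsto (fun i => a i * z) l atTop := ha.atTop_mul_const hz
  have hkz : Tendsto (fun i => k i * scaledTruncatedMoment ν α (a i * z)) l
      (𝓝 (κ * z ^ (θ - α))) := by
    refine (isRegularlyVarying_scaledTruncatedMoment hν' hθ hpos hRV hθα).tendsto_mul_comp_mul ha
      (hk.congr' ?_) hz
    filter_upwards [ha.eventually_gt_atTop 0] with i hi
    rw [hH _ hi, scaledTruncatedMoment]
  constructor
  · refine hkz.congr' ?_
    filter_upwards [haz.eventually_gt_atTop 0] with i hi
    rw [hH _ hi, scaledTruncatedMoment, mul_assoc]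
  · have hexponent : -(α / (α - θ)) * κ * z ^ (θ - α)
        = -(κ * z ^ (θ - α) * (α / (α - θ))) := by ring
    rw [hexponent]
    refine (tendsto_williamsonTransform_zpow hν' hθ hpos hRV hθα haz hkz).congr' ?_
    filter_upwards [haz.eventually_gt_atTop 0] with i hi
    rw [hG _ hi, williamsonTransform]

/-- if F̄ = 1 − F is everywhere positive and regularly varying at infinity
with index θ − α (0 < θ < α), and a_n → ∞ with n a_n^{−α} H(a_n) → 1, then for
0 ≤ s ≤ t, z > 0 and ε ∈ {0,1}:
(a) (⌊nt⌋ − ⌊ns⌋) (a_n z)^{−α} H(a_n z) → (t − s) z^{θ−α}, and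
(b) G(a_n z)^{⌊nt⌋ − ⌊ns⌋ − ε} → exp( −(α/(α−θ)) (t − s) z^{θ−α} ) as n → ∞. -/
theorem kendall_fdd_limits_regvar
    (α θ : ℝ) (hα : 0 < α) (hθ : 0 < θ) (hθα : θ < α)
    (ν : Measure ℝ) [IsProbabilityMeasure ν] (hν : ν (Set.Iio 0) = 0)
    (F G H : ℝ → ℝ)
    (hF : ∀ t, F t = (ν (Set.Iic t)).toReal)
    (hG : ∀ t, 0 < t → G t = ∫ x, max (1 - (x / t) ^ α) 0 ∂ν)
    (hH : ∀ t, 0 < t → H t = ∫ x in Set.Icc 0 t, x ^ α ∂ν)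
    (htail : ∀ x, F x < 1)
    (hRV : ∀ l, 0 < l →
      Tendsto (fun x => (1 - F (l * x)) / (1 - F x)) atTop (𝓝 (l ^ (θ - α))))
    (a : ℕ → ℝ) (ha : Tendsto a atTop atTop)
    (haH : Tendsto (fun n : ℕ => (n : ℝ) * (a n) ^ (-α) * H (a n)) atTop (𝓝 1))
    (s t : ℝ) (hs : 0 ≤ s) (hst : s ≤ t) (z : ℝ) (hz : 0 < z)
    (ε : ℤ) (hε : ε = 0 ∨ ε = 1) :
    Tendsto (fun n : ℕ =>
        ((⌊(n : ℝ) * t⌋ - ⌊(n : ℝ) * s⌋ : ℤ) : ℝ) *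
          (a n * z) ^ (-α) * H (a n * z)) atTop
      (𝓝 ((t - s) * z ^ (θ - α))) ∧
    Tendsto (fun n : ℕ =>
        G (a n * z) ^ (⌊(n : ℝ) * t⌋ - ⌊(n : ℝ) * s⌋ - ε)) atTop
      (𝓝 (Real.exp (-(α / (α - θ)) * (t - s) * z ^ (θ - α)))) := by
  have hk (m : ℤ) : Tendsto (fun n : ℕ => ((⌊n * t⌋ - ⌊n * s⌋ - m : ℤ) : ℝ)
      * (a n ^ (-α) * H (a n))) atTop (𝓝 (t - s)) := by
    simp only [mul_assoc] at haH
    simpa only [mul_one] using tendsto_floor_sub_floor_sub_mul haH s t m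
  have hlim (m : ℤ) := kendall_fdd_limits_regvar_general α θ hθ hθα ν hν F G H hF hG hH htail hRV
    ha (hk m) hz
  exact ⟨by simpa only [sub_zero] using (hlim 0).1, (hlim ε).2⟩
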